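/- arXiv:1912.01153 — 7 statements merged into one kernel-verified Lean document; each statement's English description precedes it below -/
import Mathlib

section
/- Let K be a subfield of ℂ which is finite-dimensional over ℚ, let N ≥ 1 and let k ≥ 2 be an even integer. Let a : ℕ → ℂ take all its values in K with a(1) = 1, and suppose that for every prime p not dividing N there is a root of unity χₚ ∈ K such that a(p^(r+2)) = a(p)·a(p^(r+1)) − χₚ·p^(k−1)·a(p^r) for all r ≥ 0, while for every prime p dividing N one has a(p^(r+1)) = a(p)·a(p^r) for all r ≥ 0. Then there exists an integer M ≥ 1 such that for every prime p not dividing M, either a(p) = 0 or a(p^r) ≠ 0 for all r ≥ 1. -/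
/-!
If `s 0 = 1`, `s (r + 2) = s 1 * s (r + 1) - c * s r` and `X ^ 2 - s 1 * X + c` has roots `α`, `β`,
then `(α - β) * s r = α ^ (r + 1) - β ^ (r + 1)`. So if `s` has a zero, then `ζ = α / β` is a root
of unity, and `s 1 ^ 2 = c * w` with `w = ζ + 2 + ζ⁻¹`, an algebraic integer whose conjugates have
absolute value at most `4`. When `c = χ * p ^ m` with `χ` a root of unity and `m` odd, this makes
`u * p` a square in `K` for `u = χ * w`. By Northcott's theorem `u` ranges over a finite set
depending only on `K`, and if `u ≠ 0` then `u * p` has valuation `1` at the primes above `p` as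
soon as `p` is unramified in `K` and prime to the norm of `u`.
-/

open NumberField IsDedekindDomain WithZero

/-- The sequences `r ↦ a (p ^ r)` attached to a Hecke eigenform and a prime `p` not dividing its
level, where `c = χ(p) * p ^ (k - 1)`; the eigenvalue at `p` is `s 1`. -/
structure IsHeckeSequence {R : Type*} [CommRing R] (c : R) (s : ℕ → R) : Prop where
  zero : s 0 = 1
  add_two (r : ℕ) : s (r + 2) = s 1 * s (r + 1) - c * s r

namespace IsHeckeSequence

lemma map {R S : Type*} [CommRing R] [CommRing S] {c : R} {s : ℕ → R} (hs : IsHeckeSequence c s)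
    (f : R →+* S) : IsHeckeSequence (f c) (f ∘ s) where
  zero := by simp [hs.zero]
  add_two r := by simp [hs.add_two r]

lemma sub_mul_eq_pow_sub_pow {R : Type*} [CommRing R] {α β : R} {s : ℕ → R}
    (hs : IsHeckeSequence (α * β) s) (hαβ : α + β = s 1) :
    ∀ r, (α - β) * s r = α ^ (r + 1) - β ^ (r + 1)
  | 0 => by simp [hs.zero]
  | 1 => by rw [← hαβ]; ring
  | r + 2 => by
    have ih := sub_mul_eq_pow_sub_pow hs hαβ r
    have ih_succ := sub_mul_eq_pow_sub_pow hs hαβ (r + 1)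
    rw [hs.add_two, ← hαβ]
    linear_combination (α + β) * ih_succ - α * β * ih

end IsHeckeSequence

open Polynomial in
lemma exists_add_eq_and_mul_eq {L : Type*} [Field L] [IsAlgClosed L] (b c : L) :
    ∃ α β : L, α + β = b ∧ α * β = c := by
  have hdeg : (X ^ 2 - C b * X + C c).degree = 2 := by compute_degree!
  obtain ⟨α, hα⟩ := IsAlgClosed.exists_root _ (hdeg.trans_ne two_ne_zero)
  rw [IsRoot.def, eval_add, eval_sub, eval_mul, eval_pow, eval_X, eval_C, eval_C] at hα
  exact ⟨α, b - α, by ring, by linear_combination -hα⟩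

namespace IsHeckeSequence

lemma exists_isOfFinOrder_sq_eq {L : Type*} [Field L] [IsAlgClosed L] {c : L} {s : ℕ → L}
    (hs : IsHeckeSequence c s) (hc : c ≠ 0) {r : ℕ} (hr : s r = 0) :
    ∃ ζ : Lˣ, IsOfFinOrder ζ ∧ s 1 ^ 2 = c * (ζ + 2 + ↑ζ⁻¹) := by
  obtain ⟨α, β, hadd, rfl⟩ := exists_add_eq_and_mul_eq (s 1) c
  have hpow : α ^ (r + 1) = β ^ (r + 1) := by
    rw [← sub_eq_zero, ← hs.sub_mul_eq_pow_sub_pow hadd, hr, mul_zero]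
  lift α to Lˣ using (left_ne_zero_of_mul hc).isUnit
  lift β to Lˣ using (right_ne_zero_of_mul hc).isUnit
  refine ⟨α / β, isOfFinOrder_iff_pow_eq_one.2 ⟨r + 1, r.succ_pos, ?_⟩, ?_⟩
  · rw [div_pow, div_eq_one]
    exact_mod_cast hpow
  · rw [← hadd]
    push_cast
    field_simp
    ring

end IsHeckeSequence

lemma isIntegral_of_isOfFinOrder {R A : Type*} [CommRing R] [CommRing A] [Algebra R A] {x : A}
    (hx : IsOfFinOrder x) : IsIntegral R x := by
  obtain ⟨n, hn, h⟩ := isOfFinOrder_iff_pow_eq_one.1 hx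
  exact .of_pow hn (h ▸ isIntegral_one)

lemma isIntegral_add_two_add_inv {R A : Type*} [CommRing R] [CommRing A] [Algebra R A] {ζ : Aˣ}
    (hζ : IsOfFinOrder ζ) : IsIntegral R ((ζ : A) + 2 + ↑ζ⁻¹) := by
  have h (ξ : Aˣ) (hξ : IsOfFinOrder ξ) : IsIntegral R (ξ : A) :=
    isIntegral_of_isOfFinOrder ((Units.coeHom A).isOfFinOrder hξ)
  have h2 : IsIntegral R (2 : A) := map_ofNat (algebraMap R A) 2 ▸ isIntegral_algebraMap
  exact ((h ζ hζ).add h2).add (h ζ⁻¹ hζ.inv)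

lemma norm_add_two_add_inv_le {ζ : ℂˣ} (hζ : IsOfFinOrder ζ) :
    ‖(ζ : ℂ) + 2 + ↑ζ⁻¹‖ ≤ 4 := by
  have h : ‖(ζ : ℂ)‖ = 1 := ((Units.coeHom ℂ).isOfFinOrder hζ).norm_eq_one
  calc ‖(ζ : ℂ) + 2 + ↑ζ⁻¹‖ ≤ ‖(ζ : ℂ)‖ + ‖(2 : ℂ)‖ + ‖(↑ζ⁻¹ : ℂ)‖ := norm_add₃_le
    _ = 1 + 2 + 1 := by rw [Units.val_inv_eq_inv_val, norm_inv, h, inv_one, Complex.norm_two]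
    _ = 4 := by norm_num

section NumberField

variable {K : Type*} [Field K] [NumberField K]

lemma IsHeckeSequence.exists_sq_eq_mul_ringOfIntegers {c : K} {s : ℕ → K}
    (hs : IsHeckeSequence c s) (hc : c ≠ 0) {r : ℕ} (hr : s r = 0) :
    ∃ w : 𝓞 K, (∀ φ : K →+* ℂ, ‖φ w‖ ≤ 4) ∧ s 1 ^ 2 = c * w := by
  have hζ (φ : K →+* ℂ) :
      ∃ ζ : ℂˣ, IsOfFinOrder ζ ∧ φ (s 1 ^ 2 / c) = ζ + 2 + ↑ζ⁻¹ := by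
    have hφc : φ c ≠ 0 := (map_ne_zero φ).2 hc
    obtain ⟨ζ, hζ, h⟩ := (hs.map φ).exists_isOfFinOrder_sq_eq hφc (r := r) (by simp [hr])
    refine ⟨ζ, hζ, ?_⟩
    rw [map_div₀, map_pow, div_eq_iff hφc, mul_comm]
    exact h
  have hint : IsIntegral ℤ (s 1 ^ 2 / c) := by
    obtain ⟨φ⟩ : Nonempty (K →+* ℂ) := inferInstance
    obtain ⟨ζ, hζ, h⟩ := hζ φ
    exact (isIntegral_algHom_iff φ.toIntAlgHom φ.injective).1
      (h.symm ▸ isIntegral_add_two_add_inv hζ)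
  refine ⟨⟨_, hint⟩, fun φ => ?_, (mul_div_cancel₀ _ hc).symm⟩
  obtain ⟨ζ, hζ, h⟩ := hζ φ
  exact h.symm ▸ norm_add_two_add_inv_le hζ

lemma finite_setOf_ringOfIntegers_norm_le (B : ℝ) :
    {u : 𝓞 K | ∀ φ : K →+* ℂ, ‖φ u‖ ≤ B}.Finite :=
  .of_finite_image ((NumberField.Embeddings.finite_of_norm_le K ℂ B).subset
    (by rintro _ ⟨u, hu, rfl⟩; exact ⟨u.isIntegral_coe, hu⟩))
    RingOfIntegers.coe_injective.injOn

lemma valuation_natCast_of_not_dvd_discr {p : ℕ} (hp : p.Prime) (hdisc : ¬ (p : ℤ) ∣ discr K)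
    (v : HeightOneSpectrum (𝓞 K)) (hv : (p : 𝓞 K) ∈ v.asIdeal) :
    v.valuation K p = exp (-1 : ℤ) := by
  have hpZ : Prime (p : ℤ) := Nat.prime_iff_prime_int.1 hp
  let w : HeightOneSpectrum ℤ :=
    ⟨.span {(p : ℤ)}, (Ideal.span_singleton_prime hpZ.ne_zero).2 hpZ, by simpa using hp.ne_zero⟩
  have : v.asIdeal.LiesOver w.asIdeal :=
    (Ideal.liesOver_span_iff v.isPrime.ne_top hpZ).2 (by simpa using hv)
  have hunr := (not_dvd_discr_iff_forall_mem K (𝓞 K) hpZ).1 hdisc v.asIdeal v.isPrime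
    (by simpa using hv)
  have he : w.asIdeal.ramificationIdx' v.asIdeal = 1 := by
    rw [Ideal.ramificationIdx'_eq_ramificationIdx _ _ w.ne_bot, Ideal.ramificationIdx_eq_one_iff]
    exact hunr
  have hval := HeightOneSpectrum.intValuation_liesOver w v p
  rw [he, pow_one, w.intValuation_singleton hpZ.ne_zero rfl] at hval
  have hcoe : (p : K) = algebraMap (𝓞 K) K (algebraMap ℤ (𝓞 K) p) := by simp
  rw [hval, hcoe, v.valuation_of_algebraMap]

lemma not_isSquare_exp_neg_one : ¬ IsSquare (exp (-1 : ℤ)) := by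
  rintro ⟨x, hx⟩
  have hx0 : x ≠ 0 := by rintro rfl; simp at hx
  have hlog := congrArg log hx
  rw [log_exp, log_mul hx0 hx0] at hlog
  omega

lemma exists_heightOneSpectrum_natCast_mem (K : Type*) [Field K] [NumberField K] {p : ℕ}
    (hp : p.Prime) : ∃ v : HeightOneSpectrum (𝓞 K), (p : 𝓞 K) ∈ v.asIdeal := by
  have hpZ : Prime (p : ℤ) := Nat.prime_iff_prime_int.1 hp
  have : (Ideal.span {(p : ℤ)}).IsPrime := (Ideal.span_singleton_prime hpZ.ne_zero).2 hpZ
  obtain ⟨P, hP, hPp⟩ := Ideal.nonempty_primesOver (S := 𝓞 K) (Ideal.span {(p : ℤ)})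
  have hpP : (p : 𝓞 K) ∈ P := by simpa using (Ideal.liesOver_span_iff hP.ne_top hpZ).1 hPp
  exact ⟨⟨P, hP, fun h => by simp [h, hp.ne_zero] at hpP⟩, hpP⟩

lemma natCast_dvd_norm_of_mem {p : ℕ} (hp : p.Prime) {P : Ideal (𝓞 K)} (hP : P ≠ ⊤)
    (hpP : (p : 𝓞 K) ∈ P) {u : 𝓞 K} (hu : u ∈ P) : (p : ℤ) ∣ Algebra.norm ℤ u := by
  have hover : P.LiesOver (.span {(p : ℤ)}) :=
    (Ideal.liesOver_span_iff hP (Nat.prime_iff_prime_int.1 hp)).2 (by simpa using hpP)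
  have hdvd : p ∣ P.absNorm := by
    simpa [← hover.over] using Int.absNorm_under_dvd_absNorm P
  exact (Int.natCast_dvd_natCast.2 hdvd).trans (Ideal.absNorm_dvd_norm_of_mem hu)

lemma not_isSquare_mul_natCast {p : ℕ} (hp : p.Prime) (hdisc : ¬ (p : ℤ) ∣ discr K)
    {u : 𝓞 K} (hu : ¬ (p : ℤ) ∣ Algebra.norm ℤ u) : ¬ IsSquare ((u : K) * p) := by
  obtain ⟨v, hpv⟩ := exists_heightOneSpectrum_natCast_mem K hp
  have huv : v.valuation K u = 1 := v.valuation_eq_one_iff_notMem.2 fun huv =>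
    hu (natCast_dvd_norm_of_mem hp v.isPrime.ne_top hpv huv)
  have hval : v.valuation K ((u : K) * p) = exp (-1 : ℤ) := by
    rw [map_mul, huv, one_mul, valuation_natCast_of_not_dvd_discr hp hdisc v hpv]
  exact fun h => not_isSquare_exp_neg_one (hval ▸ h.map (v.valuation K))

lemma exists_forall_prime_not_dvd_not_isSquare {T : Set (𝓞 K)} (hT : T.Finite) :
    ∃ M : ℕ, 1 ≤ M ∧ ∀ p : ℕ, p.Prime → ¬ p ∣ M → ∀ u ∈ T, u ≠ 0 →
      ¬ IsSquare ((u : K) * p) := by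
  classical
  refine ⟨(discr K).natAbs * ∏ u ∈ hT.toFinset.erase 0, (Algebra.norm ℤ u).natAbs, ?_,
    fun p hp hpM u hu hu0 => not_isSquare_mul_natCast hp ?_ ?_⟩
  · refine Nat.mul_pos (Int.natAbs_pos.2 (discr_ne_zero K)) (Finset.prod_pos fun u hu => ?_)
    exact Int.natAbs_pos.2 (Algebra.norm_ne_zero_iff.2 (Finset.ne_of_mem_erase hu))
  · rw [Int.natCast_dvd]
    exact fun h => hpM (h.mul_right _)
  · rw [Int.natCast_dvd]
    have hmem : u ∈ hT.toFinset.erase 0 := by simp [hu, hu0]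
    have hdvd := Finset.dvd_prod_of_mem (fun u => (Algebra.norm ℤ u).natAbs) hmem
    exact fun h => hpM ((h.trans hdvd).mul_left _)

end NumberField

theorem stmt_0_general (K : Type*) [Field K] [NumberField K] :
    ∃ M : ℕ, 1 ≤ M ∧ ∀ p : ℕ, p.Prime → ¬ p ∣ M → ∀ (m : ℕ) (χ : K) (s : ℕ → K),
      Odd m → IsOfFinOrder χ → IsHeckeSequence (χ * p ^ m) s → s 1 = 0 ∨ ∀ r, s r ≠ 0 := by
  obtain ⟨M, hM, hsq⟩ := exists_forall_prime_not_dvd_not_isSquare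
    (finite_setOf_ringOfIntegers_norm_le (K := K) 4)
  refine ⟨M, hM, fun p hp hpM m χ s ⟨j, hj⟩ hχ hs => ?_⟩
  by_contra! ⟨hs1, r, hr⟩
  have hp0 : (p : K) ≠ 0 := mod_cast hp.ne_zero
  obtain ⟨w, hw, hsw⟩ := hs.exists_sq_eq_mul_ringOfIntegers
    (mul_ne_zero hχ.isUnit.ne_zero (pow_ne_zero m hp0)) hr
  let u : 𝓞 K := ⟨χ, isIntegral_of_isOfFinOrder hχ⟩ * w
  have hu : (u : K) = χ * w := rfl
  have hup : (u : K) * p = (s 1 / p ^ j) ^ 2 := by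
    rw [div_pow, hsw, hu, hj]
    field_simp
    ring
  have hu0 : u ≠ 0 := by
    intro h
    have hsq0 : (s 1 / p ^ j) ^ 2 = 0 := by simp [← hup, h]
    exact pow_ne_zero 2 (div_ne_zero hs1 (pow_ne_zero j hp0)) hsq0
  have hu4 (φ : K →+* ℂ) : ‖φ u‖ ≤ 4 := by
    have hφχ : ‖φ χ‖ = 1 := (MonoidHom.isOfFinOrder (φ : K →* ℂ) hχ).norm_eq_one
    rw [hu, map_mul, norm_mul, hφχ, one_mul]
    exact hw φ
  exact hsq p hp hpM u hu4 hu0 (hup ▸ IsSquare.sq _)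

/-- Coefficient-level form of Lemma 2.2 of Kowalski–Robert–Wu: for a sequence `a`
satisfying the Hecke relations of a primitive form of even weight `k`, level `N`, with
root-of-unity character values, and values in a number field `K ⊆ ℂ`, there is an
integer `M ≥ 1` such that for every prime `p ∤ M`, either `a p = 0` or
`a (p ^ r) ≠ 0` for all `r ≥ 1`. -/
theorem stmt_0 (K : IntermediateField ℚ ℂ) [FiniteDimensional ℚ K]
    (N : ℕ) (hN : 1 ≤ N) (k : ℕ) (hk : 2 ≤ k) (hke : Even k)
    (a : ℕ → ℂ) (haK : ∀ n : ℕ, a n ∈ K) (ha1 : a 1 = 1)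
    (hrec : ∀ p : ℕ, p.Prime → ¬ p ∣ N → ∃ χ : ℂ, χ ∈ K ∧
      (∃ n : ℕ, 0 < n ∧ χ ^ n = 1) ∧
      ∀ r : ℕ, a (p ^ (r + 2)) = a p * a (p ^ (r + 1)) - χ * (p : ℂ) ^ (k - 1) * a (p ^ r))
    (hdvd : ∀ p : ℕ, p.Prime → p ∣ N → ∀ r : ℕ, a (p ^ (r + 1)) = a p * a (p ^ r)) :
    ∃ M : ℕ, 1 ≤ M ∧ ∀ p : ℕ, p.Prime → ¬ p ∣ M →
      a p = 0 ∨ ∀ r : ℕ, 1 ≤ r → a (p ^ r) ≠ 0 := by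
  have : NumberField K := {}
  have hodd : Odd (k - 1) := Nat.Even.sub_odd (by omega) hke odd_one
  obtain ⟨M, hM, h⟩ := stmt_0_general K
  refine ⟨N * M, Nat.mul_pos hN hM, fun p hp hpNM => ?_⟩
  obtain ⟨χ, hχK, ⟨n, hn, hχ⟩, hrec⟩ := hrec p hp fun hpN => hpNM (hpN.mul_right M)
  have hs : IsHeckeSequence ((⟨χ, hχK⟩ : K) * p ^ (k - 1)) fun r => ⟨a (p ^ r), haK _⟩ :=
    ⟨Subtype.ext (by simpa using ha1), fun r => Subtype.ext (by simpa using hrec r)⟩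
  have hord : IsOfFinOrder (⟨χ, hχK⟩ : K) := isOfFinOrder_iff_pow_eq_one.2 ⟨n, hn, Subtype.ext hχ⟩
  have hne := h p hp (fun hpM => hpNM (hpM.mul_left N)) (k - 1) _ _ hodd hord hs
  simpa [Subtype.ext_iff] using hne.imp_right fun h r (_ : 1 ≤ r) => h r
end

section
/- Let a : ℕ → ℂ satisfy a(1) = 1 and a(mn) = a(m)·a(n) whenever m and n are coprime positive integers, and let M ≥ 1 be an integer such that for every prime p not dividing M, either a(p) = 0 or a(p^r) ≠ 0 for all r ≥ 1. If n is the smallest positive integer with gcd(n, M) = 1 and a(n) = 0 (i.e. a(n) = 0 and a(m) ≠ 0 for every positive integer m < n coprime to M), then n is prime. -/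
/-! A multiplicative function is the product of its values at the prime powers exactly dividing
its argument, so a zero at `n` comes from a zero at some `p ^ k ∣ n`, hence at `p` itself;
minimality of `n` then forces `n = p`. -/

section Multiplicative

variable {R : Type*} [CommMonoidWithZero R] [NoZeroDivisors R] [Nontrivial R]
  {a : ℕ → R} {n : ℕ}

theorem exists_primeFactor_pow_factorization_eq_zero (ha1 : a 1 = 1)
    (hmul : ∀ m n : ℕ, 0 < m → 0 < n → Nat.Coprime m n → a (m * n) = a m * a n)
    (hn : n ≠ 0) (han : a n = 0) :
    ∃ p ∈ n.primeFactors, a (p ^ n.factorization p) = 0 := by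
  have hmul' (x y : ℕ) (hxy : x.Coprime y) : a (x * y) = a x * a y := by
    rcases x.eq_zero_or_pos with rfl | hx
    · simp [(Nat.coprime_zero_left y).mp hxy, ha1]
    rcases y.eq_zero_or_pos with rfl | hy
    · simp [(Nat.coprime_zero_right x).mp hxy, ha1]
    exact hmul x y hx hy hxy
  rw [Nat.multiplicative_factorization a hmul' ha1 hn] at han
  exact Finset.prod_eq_zero_iff.mp han

theorem stmt_1_general (ha1 : a 1 = 1)
    (hmul : ∀ m n : ℕ, 0 < m → 0 < n → Nat.Coprime m n → a (m * n) = a m * a n)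
    (hn : n ≠ 0) (han : a n = 0)
    (hP : ∀ p : ℕ, p.Prime → p ∣ n → a p = 0 ∨ ∀ r : ℕ, 1 ≤ r → a (p ^ r) ≠ 0)
    (hmin : ∀ d : ℕ, d ∣ n → d < n → a d ≠ 0) :
    n.Prime := by
  obtain ⟨p, hp, hpow⟩ := exists_primeFactor_pow_factorization_eq_zero ha1 hmul hn han
  obtain ⟨hpp, hpn, -⟩ := Nat.mem_primeFactors.mp hp
  have hap : a p = 0 := (hP p hpp hpn).resolve_right fun hpow_ne =>
    hpow_ne _ (hpp.factorization_pos_of_dvd hn hpn) hpow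
  have hp_eq : p = n := (Nat.le_of_dvd hn.bot_lt hpn).eq_of_not_lt fun hlt => hmin p hpn hlt hap
  exact hp_eq ▸ hpp

end Multiplicative

/-- If `a` is multiplicative on coprime arguments with `a 1 = 1`, and for every prime
`p ∤ M` either `a p = 0` or `a (p^r) ≠ 0` for all `r ≥ 1`, then the smallest positive
integer `n` coprime to `M` with `a n = 0` is prime. -/
theorem stmt_1 (a : ℕ → ℂ) (ha1 : a 1 = 1)
    (hmul : ∀ m n : ℕ, 0 < m → 0 < n → Nat.Coprime m n → a (m * n) = a m * a n)
    (M : ℕ) (hM : 1 ≤ M)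
    (hP : ∀ p : ℕ, p.Prime → ¬ p ∣ M → a p = 0 ∨ ∀ r : ℕ, 1 ≤ r → a (p ^ r) ≠ 0)
    (n : ℕ) (hn : 0 < n) (hcop : Nat.gcd n M = 1) (han : a n = 0)
    (hmin : ∀ m : ℕ, 0 < m → m < n → Nat.gcd m M = 1 → a m ≠ 0) :
    n.Prime := by
  have hdvd {d : ℕ} (hd : d ∣ n) : d.Coprime M := Nat.Coprime.coprime_dvd_left hd hcop
  exact stmt_1_general ha1 hmul hn.ne' han
    (fun p hp hpn => hP p hp (hp.coprime_iff_not_dvd.mp (hdvd hpn)))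
    fun d hdn hlt => hmin d (Nat.pos_of_dvd_of_pos hdn hn) hlt (hdvd hdn)
end

section
/- Let N ≥ 1 and let k ≥ 2 be an even integer. Let a : ℕ → ℤ satisfy: a(p^0) = 1 and a(p^(r+2)) = a(p)·a(p^(r+1)) − p^(k−1)·a(p^r) for every prime p not dividing N and every r ≥ 0. Then for every prime p with p ∤ N, p ≠ 2 and p ≠ 3, either a(p) = 0 or a(p^r) ≠ 0 for all r ≥ 1. -/
/-!
The values `a (p ^ r)` are those of a Dickson polynomial of the second kind,
`a (p ^ r) = (dickson 2 (p ^ (k - 1)) r).eval (a p)`, with `k - 1` odd. If `p ^ (k - 1)` does not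
divide `(a p) ^ 2`, then of the two terms of the recurrence the first always has the smaller
`p`-adic valuation, so no cancellation occurs. If it does divide, then by parity so does `p ^ k`;
since `p ≥ 4` and `a p ≠ 0`, the characteristic polynomial `X ^ 2 - a p * X + p ^ (k - 1)` then
has nonnegative discriminant, and each value is, in absolute value, at least `|a p| / 2` times the
previous one.
-/

open Polynomial

section CommRing

variable {R : Type*} [CommRing R]

lemma dickson_two_zero_eq_one (q : R) : dickson 2 q 0 = 1 := by
  rw [dickson_zero]
  norm_num

lemma eval_dickson_add_two (k : ℕ) (q x : R) (n : ℕ) :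
    (dickson k q (n + 2)).eval x =
      x * (dickson k q (n + 1)).eval x - q * (dickson k q n).eval x := by
  simp only [dickson_add_two, eval_sub, eval_mul, eval_X, eval_C]

lemma eq_eval_dickson_two_of_recurrence {u : ℕ → R} {q x : R} (h0 : u 0 = 1) (h1 : u 1 = x)
    (hrec : ∀ n, u (n + 2) = x * u (n + 1) - q * u n) (n : ℕ) :
    u n = (dickson 2 q n).eval x := by
  induction n using Nat.twoStepInduction with
  | zero => rw [h0, dickson_two_zero_eq_one, eval_one]
  | one => rw [h1, dickson_one, eval_X]
  | more n ih ih' => rw [hrec, eval_dickson_add_two, ih, ih']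

lemma eval_neg_dickson (k : ℕ) (q x : R) (n : ℕ) :
    (dickson k q n).eval (-x) = (-1) ^ n * (dickson k q n).eval x := by
  induction n using Nat.twoStepInduction with
  | zero => simp only [dickson_zero, eval_sub, eval_ofNat, eval_natCast, pow_zero, one_mul]
  | one => simp only [dickson_one, eval_X, pow_one, neg_one_mul]
  | more n ih ih' =>
    rw [eval_dickson_add_two, eval_dickson_add_two, ih, ih']
    ring

end CommRing

section Valuation

variable {R Γ₀ : Type*} [CommRing R] [LinearOrderedCommMonoidWithZero Γ₀] (v : Valuation R Γ₀)
  {q x : R}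

lemma map_pow_pos_of_lt_map_sq {γ : Γ₀} (h : γ < v (x ^ 2)) (n : ℕ) : 0 < v (x ^ n) := by
  have hx : v x ≠ 0 := by
    rw [v.map_pow] at h
    exact ne_zero_pow two_ne_zero (ne_zero_of_lt h)
  rw [v.map_pow]
  exact pow_pos (zero_lt_iff.mpr hx) n

lemma map_eval_dickson_two_of_map_lt_map_sq (h : v q < v (x ^ 2)) (n : ℕ) :
    v ((dickson 2 q n).eval x) = v (x ^ n) := by
  induction n using Nat.twoStepInduction with
  | zero => rw [dickson_two_zero_eq_one, eval_one, pow_zero]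
  | one => rw [dickson_one, eval_X, pow_one]
  | more n ih ih' =>
    have hlead : v (x * (dickson 2 q (n + 1)).eval x) = v (x ^ (n + 2)) := by
      rw [v.map_mul, ih', ← v.map_mul, ← pow_succ']
    have htail : v (q * (dickson 2 q n).eval x) < v (x ^ (n + 2)) := by
      rw [v.map_mul, ih, add_comm, pow_add, v.map_mul]
      exact mul_lt_mul_of_pos_right h (map_pow_pos_of_lt_map_sq v h n)
    rw [eval_dickson_add_two, v.map_sub_eq_of_lt_left (htail.trans_eq hlead.symm), hlead]

lemma eval_dickson_two_ne_zero_of_map_lt_map_sq (h : v q < v (x ^ 2)) (n : ℕ) :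
    (dickson 2 q n).eval x ≠ 0 := by
  intro h0
  have hval := map_eval_dickson_two_of_map_lt_map_sq v h n
  rw [h0, v.map_zero] at hval
  exact (map_pow_pos_of_lt_map_sq v h n).ne hval

end Valuation

lemma eval_dickson_two_ne_zero_of_not_pow_dvd_sq {R : Type*} [CommRing R] [IsDomain R] {p x : R}
    (hp : Prime p) {m : ℕ} (h : ¬ p ^ m ∣ x ^ 2) (n : ℕ) : (dickson 2 (p ^ m) n).eval x ≠ 0 := by
  have hlt : emultiplicity p (x ^ 2) < emultiplicity p (p ^ m) := by
    rwa [emultiplicity_pow_self_of_prime hp, emultiplicity_lt_iff_not_dvd]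
  -- `toValuation` reverses the order, so `hlt` unfolds to the inequality of valuations required.
  exact eval_dickson_two_ne_zero_of_map_lt_map_sq (multiplicity_addValuation hp).toValuation hlt n

section LinearOrderedRing

variable {R : Type*} [CommRing R] [LinearOrder R] [IsStrictOrderedRing R] {q x : R}

lemma eval_dickson_two_pos (hx : 0 < x) (hq : 4 * q ≤ x ^ 2) (n : ℕ) :
    0 < (dickson 2 q n).eval x := by
  -- `x / 2` is the midpoint of the roots of the characteristic polynomial `X ^ 2 - x * X + q`.
  suffices h : 0 < (dickson 2 q n).eval x ∧
      x * (dickson 2 q n).eval x ≤ 2 * (dickson 2 q (n + 1)).eval x from h.1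
  induction n with
  | zero =>
    rw [dickson_two_zero_eq_one, dickson_one, eval_one, eval_X]
    exact ⟨one_pos, by linarith⟩
  | succ n ih =>
    obtain ⟨hpos, hratio⟩ := ih
    have hpos' : 0 < (dickson 2 q (n + 1)).eval x := by
      linarith [mul_pos hx hpos]
    refine ⟨hpos', ?_⟩
    have hmul := mul_le_mul_of_nonneg_left hratio hx.le
    have hdisc := mul_le_mul_of_nonneg_right hq hpos.le
    rw [eval_dickson_add_two]
    linarith

lemma eval_dickson_two_ne_zero_of_four_mul_le_sq (hx : x ≠ 0) (hq : 4 * q ≤ x ^ 2) (n : ℕ) :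
    (dickson 2 q n).eval x ≠ 0 := by
  rcases hx.lt_or_gt with hneg | hpos
  · have h := eval_dickson_two_pos (neg_pos.mpr hneg) (hq.trans_eq (neg_sq x).symm) n
    rw [eval_neg_dickson] at h
    exact right_ne_zero_of_mul h.ne'
  · exact (eval_dickson_two_pos hpos hq n).ne'

end LinearOrderedRing

lemma pow_succ_dvd_sq_of_odd {M : Type*} [CommMonoidWithZero M] [IsCancelMulZero M] {p x : M}
    (hp : Prime p) {m : ℕ} (hm : Odd m) (h : p ^ m ∣ x ^ 2) : p ^ (m + 1) ∣ x ^ 2 := by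
  rw [pow_dvd_iff_le_emultiplicity, emultiplicity_pow hp] at h ⊢
  cases he : emultiplicity p x with
  | top => simp
  | coe e =>
    rw [he] at h
    norm_cast at h ⊢
    obtain ⟨l, rfl⟩ := hm
    omega

lemma eval_dickson_two_prime_pow_ne_zero {p m : ℕ} (hp : p.Prime) (hp4 : 4 ≤ p) (hm : Odd m)
    {x : ℤ} (hx : x ≠ 0) (n : ℕ) : (dickson 2 ((p : ℤ) ^ m) n).eval x ≠ 0 := by
  have hpZ : Prime (p : ℤ) := Nat.prime_iff_prime_int.mp hp
  by_cases hdvd : (p : ℤ) ^ m ∣ x ^ 2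
  · refine eval_dickson_two_ne_zero_of_four_mul_le_sq hx ?_ n
    calc 4 * (p : ℤ) ^ m ≤ p * (p : ℤ) ^ m := by gcongr; exact_mod_cast hp4
      _ = (p : ℤ) ^ (m + 1) := (pow_succ' _ _).symm
      _ ≤ x ^ 2 := Int.le_of_dvd (by positivity) (pow_succ_dvd_sq_of_odd hpZ hm hdvd)
  · exact eval_dickson_two_ne_zero_of_not_pow_dvd_sq hpZ hdvd n

/-- Corrected second part of Lemma 2.2 of Kowalski–Robert–Wu: for an integer-valued
sequence satisfying the Hecke relations of a primitive form of even weight `k` and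
level `N` with trivial character, for every prime `p` with `p ∤ N`, `p ≠ 2`, `p ≠ 3`,
either `a p = 0` or `a (p^r) ≠ 0` for all `r ≥ 1`. -/
theorem stmt_2 (N : ℕ) (hN : 1 ≤ N) (k : ℕ) (hk : 2 ≤ k) (hke : Even k)
    (a : ℕ → ℤ)
    (hone : ∀ p : ℕ, p.Prime → ¬ p ∣ N → a (p ^ 0) = 1)
    (hrec : ∀ p : ℕ, p.Prime → ¬ p ∣ N → ∀ r : ℕ,
      a (p ^ (r + 2)) = a p * a (p ^ (r + 1)) - (p : ℤ) ^ (k - 1) * a (p ^ r)) :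
    ∀ p : ℕ, p.Prime → ¬ p ∣ N → p ≠ 2 → p ≠ 3 →
      a p = 0 ∨ ∀ r : ℕ, 1 ≤ r → a (p ^ r) ≠ 0 := by
  intro p hp hpN hp2 hp3
  refine or_iff_not_imp_left.mpr fun hap r _ ↦ ?_
  have hp4 : 4 ≤ p := by
    have := hp.two_le
    omega
  have hodd : Odd (k - 1) := Nat.Even.sub_odd (by omega) hke odd_one
  rw [eq_eval_dickson_two_of_recurrence (u := fun r ↦ a (p ^ r)) (hone p hp hpN)
    (by rw [pow_one]) (hrec p hp hpN) r]
  exact eval_dickson_two_prime_pow_ne_zero hp hp4 hodd hap r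
end

section
/- Let N ≥ 1 with 3 ∤ N and let k ≥ 2 be an even integer. Let a : ℕ → ℤ satisfy a(p^0) = 1 and a(p^(r+2)) = a(p)·a(p^(r+1)) − p^(k−1)·a(p^r) for every prime p not dividing N and every r ≥ 0. If a(3) ≠ 3^(k/2) and a(3) ≠ −3^(k/2), then either a(3) = 0 or a(3^r) ≠ 0 for all r ≥ 1. -/
/-!
The values `a (p ^ r)` form a Lucas sequence: `a (p ^ r)` is the Dickson polynomial of the second
kind `dickson 2 q r`, with `q = p ^ (k - 1)`, evaluated at `t = a p`. Put `m = k / 2`.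

* If `p ^ m ∣ t` and `t` is neither `0` nor `± p ^ m`, then `2 * p ^ m ≤ |t|`. Hence the
  discriminant `t ^ 2 - 4 * q` of the recurrence is nonnegative. Taking `t > 0` without loss of
  generality, each term is then at least `t / 2` times the preceding one, so all are positive.
* If `p ^ m ∤ t`, write `t = p ^ v * s` with `p ∤ s`. Since `2 * v < k - 1`, dividing the `r`-th
  term by `p ^ (v * r)` gives the Lucas sequence of some parameters `s` and `q'` with `p ∣ q'`. Its
  terms are congruent to `s ^ r` modulo `p`, so they do not vanish.
-/

section DicksonSecondKind

open Polynomial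

section CommRing

variable {R : Type*} [CommRing R]

lemma eval_dickson_two_zero (t q : R) : (dickson 2 q 0).eval t = 1 := by
  simp only [dickson_zero, eval_sub, eval_ofNat, eval_natCast]
  norm_num

lemma eval_dickson_two_one (t q : R) : (dickson 2 q 1).eval t = t := by
  rw [dickson_one, eval_X]

lemma eval_dickson_two_add_two (t q : R) (r : ℕ) :
    (dickson 2 q (r + 2)).eval t =
      t * (dickson 2 q (r + 1)).eval t - q * (dickson 2 q r).eval t := by
  simp only [dickson_add_two, eval_sub, eval_mul, eval_X, eval_C]

lemma eq_eval_dickson_two {u : ℕ → R} {t q : R} (h0 : u 0 = 1) (h1 : u 1 = t)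
    (hrec : ∀ r, u (r + 2) = t * u (r + 1) - q * u r) (r : ℕ) :
    u r = (dickson 2 q r).eval t := by
  induction r using Nat.twoStepInduction with
  | zero => rw [h0, eval_dickson_two_zero]
  | one => rw [h1, eval_dickson_two_one]
  | more r ih ih' => rw [hrec, ih, ih', eval_dickson_two_add_two]

lemma eval_dickson_two_mul (d t q : R) (r : ℕ) :
    (dickson 2 (d ^ 2 * q) r).eval (d * t) = d ^ r * (dickson 2 q r).eval t := by
  symm
  refine eq_eval_dickson_two (u := fun r ↦ d ^ r * (dickson 2 q r).eval t) ?_ ?_ (fun r ↦ ?_) r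
  · rw [eval_dickson_two_zero, pow_zero, mul_one]
  · rw [eval_dickson_two_one, pow_one]
  · rw [eval_dickson_two_add_two]
    ring

lemma eval_dickson_two_neg (t q : R) (r : ℕ) :
    (dickson 2 q r).eval (-t) = (-1) ^ r * (dickson 2 q r).eval t := by
  simpa only [neg_one_sq, one_mul, neg_one_mul] using eval_dickson_two_mul (-1) t q r

lemma dvd_eval_dickson_two_sub_pow (t q : R) (r : ℕ) : q ∣ (dickson 2 q r).eval t - t ^ r := by
  rw [← Ideal.mem_span_singleton, ← Ideal.Quotient.eq, map_pow, ← eval_map_apply, map_dickson,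
    Ideal.Quotient.eq_zero_iff_mem.2 (Ideal.mem_span_singleton_self q), dickson_two_zero, eval_pow,
    eval_X]

lemma not_dvd_eval_dickson_two {p t q : R} (hp : Prime p) (hq : p ∣ q) (ht : ¬ p ∣ t)
    (r : ℕ) : ¬ p ∣ (dickson 2 q r).eval t := fun h ↦
  ht <| hp.dvd_of_dvd_pow <|
    (dvd_iff_dvd_of_dvd_sub (hq.trans (dvd_eval_dickson_two_sub_pow t q r))).1 h

lemma eval_dickson_two_ne_zero_of_not_pow_dvd [IsDomain R] {p t q : R} {n : ℕ} (hp : Prime p)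
    (hq : p ^ n ∣ q) (ht : ¬ p ^ ((n + 1) / 2) ∣ t) (r : ℕ) : (dickson 2 q r).eval t ≠ 0 := by
  have hfin : FiniteMultiplicity p t :=
    ⟨(n + 1) / 2, fun h ↦ ht ((pow_dvd_pow p (Nat.le_succ _)).trans h)⟩
  have hv : multiplicity p t < (n + 1) / 2 := hfin.multiplicity_lt_iff_not_dvd.2 ht
  obtain ⟨s, hs, hps⟩ := hfin.exists_eq_pow_mul_and_not_dvd
  set v := multiplicity p t
  obtain ⟨e, rfl⟩ : p ^ (2 * v + 1) ∣ q := (pow_dvd_pow p (by omega)).trans hq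
  have hscale : p ^ (2 * v + 1) * e = (p ^ v) ^ 2 * (p * e) := by ring
  rw [hs, hscale, eval_dickson_two_mul]
  refine mul_ne_zero (pow_ne_zero _ (pow_ne_zero _ hp.ne_zero)) fun h ↦ ?_
  exact not_dvd_eval_dickson_two hp (dvd_mul_right p e) hps r (h ▸ dvd_zero p)

end CommRing

section LinearOrder

variable {R : Type*} [CommRing R] [LinearOrder R] [IsStrictOrderedRing R] {t q : R}

lemma eval_dickson_two_pos_s4 (ht : 0 < t) (hdisc : 4 * q ≤ t ^ 2) (r : ℕ) :
    0 < (dickson 2 q r).eval t := by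
  suffices h : 0 < (dickson 2 q r).eval t ∧
      t * (dickson 2 q r).eval t ≤ 2 * (dickson 2 q (r + 1)).eval t from h.1
  induction r with
  | zero =>
    rw [eval_dickson_two_zero, eval_dickson_two_one]
    exact ⟨one_pos, by linarith⟩
  | succ r ih =>
    obtain ⟨hpos, hgrowth⟩ := ih
    rw [eval_dickson_two_add_two]
    set x := (dickson 2 q r).eval t
    set y := (dickson 2 q (r + 1)).eval t
    have hdisc' : 4 * q * x ≤ t ^ 2 * x := by gcongr
    have hgrowth' : t * (t * x) ≤ t * (2 * y) := by gcongr
    exact ⟨by linarith [mul_pos ht hpos], by linarith⟩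

lemma eval_dickson_two_ne_zero_of_four_mul_le_sq_s4 (ht : t ≠ 0) (hdisc : 4 * q ≤ t ^ 2) (r : ℕ) :
    (dickson 2 q r).eval t ≠ 0 := by
  rcases ht.lt_or_gt with hneg | hpos
  · have h := eval_dickson_two_pos_s4 (neg_pos.2 hneg) (by rwa [neg_sq]) r
    rw [eval_dickson_two_neg] at h
    exact right_ne_zero_of_mul h.ne'
  · exact (eval_dickson_two_pos_s4 hpos hdisc r).ne'

end LinearOrder

lemma two_mul_abs_le_abs_of_dvd {d t : ℤ} (hdvd : d ∣ t) (h0 : t ≠ 0) (hd : t ≠ d)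
    (hd' : t ≠ -d) : 2 * |d| ≤ |t| := by
  obtain ⟨s, rfl⟩ := hdvd
  have hs0 : s ≠ 0 := right_ne_zero_of_mul h0
  have hs1 : s ≠ 1 := by rintro rfl; exact hd (mul_one d)
  have hs1' : s ≠ -1 := by rintro rfl; exact hd' (mul_neg_one d)
  have hs : 2 ≤ |s| := by grind
  rw [abs_mul, mul_comm]
  gcongr

lemma eval_dickson_two_prime_pow_ne_zero_s4 {p t : ℤ} {n : ℕ} (hp : Prime p) (h0 : t ≠ 0)
    (ht : t ≠ p ^ ((n + 1) / 2)) (ht' : t ≠ -p ^ ((n + 1) / 2)) (r : ℕ) :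
    (dickson 2 (p ^ n) r).eval t ≠ 0 := by
  by_cases hdvd : p ^ ((n + 1) / 2) ∣ t
  · refine eval_dickson_two_ne_zero_of_four_mul_le_sq_s4 h0 ?_ r
    calc 4 * p ^ n ≤ 4 * |p| ^ n := by linarith [le_abs_self (p ^ n), abs_pow p n]
      _ ≤ 4 * |p| ^ ((n + 1) / 2 * 2) := by
        gcongr
        · exact Int.one_le_abs hp.ne_zero
        · omega
      _ = (2 * |p ^ ((n + 1) / 2)|) ^ 2 := by rw [abs_pow]; ring
      _ ≤ |t| ^ 2 := by gcongr; exact two_mul_abs_le_abs_of_dvd hdvd h0 ht ht'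
      _ = t ^ 2 := sq_abs t
  · exact eval_dickson_two_ne_zero_of_not_pow_dvd hp dvd_rfl hdvd r

end DicksonSecondKind

theorem stmt_4_general {p : ℕ} (hp : p.Prime) (n : ℕ) (a : ℕ → ℤ) (hone : a (p ^ 0) = 1)
    (hrec : ∀ r : ℕ, a (p ^ (r + 2)) = a p * a (p ^ (r + 1)) - (p : ℤ) ^ n * a (p ^ r))
    (ht : a p ≠ p ^ ((n + 1) / 2)) (ht' : a p ≠ -(p ^ ((n + 1) / 2))) :
    a p = 0 ∨ ∀ r : ℕ, a (p ^ r) ≠ 0 := by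
  refine or_iff_not_imp_left.2 fun h0 r ↦ ?_
  have hdickson : a (p ^ r) = (Polynomial.dickson 2 ((p : ℤ) ^ n) r).eval (a p) :=
    eq_eval_dickson_two (u := fun r ↦ a (p ^ r)) hone (by rw [pow_one]) hrec r
  rw [hdickson]
  exact eval_dickson_two_prime_pow_ne_zero_s4 (Nat.prime_iff_prime_int.1 hp) h0 ht ht' r

/-- If `3 ∤ N`, `k ≥ 2` is even, `a : ℕ → ℤ` satisfies the Hecke relations at primes
not dividing `N`, and `a 3 ≠ ±3^(k/2)`, then either `a 3 = 0` or `a (3^r) ≠ 0` for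
all `r ≥ 1`. -/
theorem stmt_4 (N : ℕ) (hN : 1 ≤ N) (hN3 : ¬ (3 ∣ N)) (k : ℕ) (hk : 2 ≤ k) (hke : Even k)
    (a : ℕ → ℤ)
    (hone : ∀ p : ℕ, p.Prime → ¬ p ∣ N → a (p ^ 0) = 1)
    (hrec : ∀ p : ℕ, p.Prime → ¬ p ∣ N → ∀ r : ℕ,
      a (p ^ (r + 2)) = a p * a (p ^ (r + 1)) - (p : ℤ) ^ (k - 1) * a (p ^ r))
    (h3 : a 3 ≠ 3 ^ (k / 2)) (h3' : a 3 ≠ -(3 ^ (k / 2))) :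
    a 3 = 0 ∨ ∀ r : ℕ, 1 ≤ r → a (3 ^ r) ≠ 0 := by
  obtain ⟨n, rfl⟩ := Nat.exists_eq_add_of_le' (one_le_two.trans hk)
  exact (stmt_4_general Nat.prime_three n a (hone 3 Nat.prime_three hN3)
    (hrec 3 Nat.prime_three hN3) h3 h3').imp_right fun h r _ ↦ h r
end

section
/- Let N ≥ 1 and let k ≥ 2 be an even integer. Let a : ℕ → ℤ satisfy: a(1) = 1; a(mn) = a(m)·a(n) for all coprime positive integers m, n; a(p^(r+2)) = a(p)·a(p^(r+1)) − p^(k−1)·a(p^r) for every prime p ∤ N and every r ≥ 0; and a(p^(r+1)) = a(p)·a(p^r) for every prime p | N and every r ≥ 0. If n is the smallest positive integer with gcd(n, 6) = 1 and a(n) = 0, then n is prime. -/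
/-!
A least zero `n` is a prime power `p ^ r` by multiplicativity, and `r ↦ a (p ^ r)` is a Lucas
sequence with parameters `P = a p` and `Q = p ^ (k - 1)` (or a geometric progression when `p ∣ N`).
Up to scaling, the terms of a Lucas sequence with `0 < Q` are the values of the Chebyshev
polynomials of the second kind at `P / (2 √Q)`, so a vanishing term forces `P ^ 2 / Q = 4 cos ^ 2 θ`
with `θ` a rational multiple of `π` strictly between `0` and `π`. By Niven's theorem this rational
number is `0`, `1`, `2` or `3`. As `k - 1` is odd, `p` divides it, so either `a p = 0`, and then
`n = p` by minimality, or `p ∈ {2, 3}`.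
-/

open Real

/-- `u n` is the term `U_{n+1}(P, Q)` of the Lucas sequence of the first kind with parameters `P`
and `Q`. The index is shifted so that `r ↦ a (p ^ r)` is such a sequence for a Hecke eigenform. -/
structure IsLucasSequence {R : Type*} [CommRing R] (P Q : R) (u : ℕ → R) : Prop where
  zero : u 0 = 1
  one : u 1 = P
  add_two (n : ℕ) : u (n + 2) = P * u (n + 1) - Q * u n

namespace IsLucasSequence

theorem map {R S : Type*} [CommRing R] [CommRing S] {P Q : R} {u : ℕ → R}
    (hu : IsLucasSequence P Q u) (f : R →+* S) : IsLucasSequence (f P) (f Q) (f ∘ u) where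
  zero := by simp [hu.zero]
  one := by simp [hu.one]
  add_two n := by simp [hu.add_two]

theorem eq_pow_mul_eval_chebyshevU {R : Type*} [CommRing R] {x q : R} {u : ℕ → R}
    (hu : IsLucasSequence (2 * x * q) (q ^ 2) u) (n : ℕ) :
    u n = q ^ n * (Polynomial.Chebyshev.U R n).eval x := by
  induction n using Nat.twoStepInduction with
  | zero => simp [hu.zero]
  | one => simp [hu.one, mul_comm]
  | more n ih ih' =>
    rw [hu.add_two, ih, ih']
    push_cast
    simp only [Polynomial.Chebyshev.U_add_two, Polynomial.eval_sub, Polynomial.eval_mul,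
      Polynomial.eval_ofNat, Polynomial.eval_X]
    ring

theorem exists_sq_eq_four_mul_cos_sq_mul {P Q : ℝ} {u : ℕ → ℝ} (hu : IsLucasSequence P Q u)
    (hQ : 0 < Q) {r : ℕ} (hr : u r = 0) :
    ∃ θ ∈ Set.Ioo 0 π, (∃ q : ℚ, θ = q * π) ∧ P ^ 2 = 4 * cos θ ^ 2 * Q := by
  have hsqrt : 0 < √Q := sqrt_pos.mpr hQ
  obtain ⟨x, rfl⟩ : ∃ x, P = 2 * x * √Q := ⟨P / (2 * √Q), by field_simp⟩
  have hu' : IsLucasSequence (2 * x * √Q) (√Q ^ 2) u := by rwa [sq_sqrt hQ.le]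
  have hroot : x ∈ (Polynomial.Chebyshev.U ℝ r).roots := by
    rw [Polynomial.mem_roots ((Polynomial.Chebyshev.U_eq_zero_iff ℝ r).not.mpr (by omega))]
    simpa [hu'.eq_pow_mul_eval_chebyshevU, hsqrt.ne'] using hr
  obtain ⟨j, hj, rfl⟩ : ∃ j < r, cos ((j + 1) * π / (r + 1)) = x := by
    simpa [Polynomial.Chebyshev.roots_U_real] using hroot
  refine ⟨(j + 1) * π / (r + 1), ⟨by positivity, ?_⟩, ⟨(j + 1) / (r + 1), ?_⟩, ?_⟩
  · rw [div_lt_iff₀ (by positivity), mul_comm]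
    gcongr
  · push_cast
    ring
  · rw [mul_pow, sq_sqrt hQ.le]
    ring

end IsLucasSequence

theorem exists_four_mul_cos_sq_eq_natCast {θ : ℝ} (hsin : sin θ ≠ 0)
    (hθq : ∃ q : ℚ, θ = q * π) (hcos : ∃ q : ℚ, cos θ ^ 2 = q) :
    ∃ c : ℕ, c < 4 ∧ 4 * cos θ ^ 2 = c := by
  obtain ⟨q, hq⟩ := hθq
  obtain ⟨s, hs⟩ := hcos
  have hdouble : 4 * cos θ ^ 2 = 2 + 2 * cos (2 * θ) := by rw [cos_two_mul]; ring
  have hlt : cos (2 * θ) < 1 := by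
    have hsq : 0 < sin θ ^ 2 := by positivity
    rw [cos_two_mul, cos_sq']
    linarith
  have hniven := niven (θ := 2 * θ) ⟨2 * q, by rw [hq]; push_cast; ring⟩
    ⟨2 * s - 1, by rw [cos_two_mul, hs]; push_cast; ring⟩
  rw [hdouble]
  rcases hniven with h | h | h | h | h
  · exact ⟨0, by norm_num, by rw [h]; norm_num⟩
  · exact ⟨1, by norm_num, by rw [h]; norm_num⟩
  · exact ⟨2, by norm_num, by rw [h]; norm_num⟩
  · exact ⟨3, by norm_num, by rw [h]; norm_num⟩
  · exact absurd h hlt.ne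

theorem prime_dvd_of_sq_eq_mul_pow_of_odd {p : ℕ} (hp : p.Prime) {m : ℕ} (hm : Odd m) {x : ℚ}
    {c : ℤ} (h : x ^ 2 = c * (p : ℚ) ^ m) : (p : ℤ) ∣ c := by
  have : Fact p.Prime := ⟨hp⟩
  by_contra hpc
  have hc : (c : ℚ) ≠ 0 := Int.cast_ne_zero.mpr fun hc ↦ hpc (hc ▸ dvd_zero _)
  have hp0 : (p : ℚ) ≠ 0 := mod_cast hp.ne_zero
  have hval : 2 * padicValRat p x = m := by
    simpa [padicValRat.pow, padicValRat.mul hc (pow_ne_zero m hp0), padicValRat.self hp.one_lt,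
      padicValInt.eq_zero_of_not_dvd hpc] using congrArg (padicValRat p) h
  obtain ⟨j, rfl⟩ := hm
  omega

namespace IsLucasSequence

theorem exists_sq_eq_natCast_mul {P Q : ℚ} {u : ℕ → ℚ} (hu : IsLucasSequence P Q u) (hQ : 0 < Q)
    {r : ℕ} (hr : u r = 0) : ∃ c : ℕ, c < 4 ∧ P ^ 2 = c * Q := by
  obtain ⟨θ, hθ, hθq, hcos⟩ := (hu.map (algebraMap ℚ ℝ)).exists_sq_eq_four_mul_cos_sq_mul
    (r := r) (by simpa using hQ) (by simp [hr])
  simp only [eq_ratCast] at hcos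
  have hQ' : (Q : ℝ) ≠ 0 := mod_cast hQ.ne'
  obtain ⟨c, hc4, hc⟩ := exists_four_mul_cos_sq_eq_natCast (sin_pos_of_mem_Ioo hθ).ne' hθq
    ⟨P ^ 2 / (4 * Q), by push_cast; rw [hcos]; field_simp⟩
  rw [hc] at hcos
  exact ⟨c, hc4, mod_cast hcos⟩

theorem dvd_six_of_apply_eq_zero {P : ℚ} {p m : ℕ} {u : ℕ → ℚ}
    (hu : IsLucasSequence P ((p : ℚ) ^ m) u) (hp : p.Prime) (hm : Odd m) (hP : P ≠ 0)
    {r : ℕ} (hr : u r = 0) : p ∣ 6 := by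
  have hp0 : (0 : ℚ) < p := mod_cast hp.pos
  obtain ⟨c, hc4, hc⟩ := hu.exists_sq_eq_natCast_mul (pow_pos hp0 m) hr
  have hpc : p ∣ c := mod_cast prime_dvd_of_sq_eq_mul_pow_of_odd hp hm (c := c) (mod_cast hc)
  have hc0 : 0 < c := Nat.pos_of_ne_zero fun h ↦ hP (by simpa [h] using hc)
  have hc6 : c ∣ 6 := by clear hc hpc; interval_cases c <;> norm_num
  exact hpc.trans hc6

end IsLucasSequence

theorem isPrimePow_of_minimal_zero {M : Type*} [MulZeroClass M] [NoZeroDivisors M] {a : ℕ → M}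
    {d n : ℕ} (ha1 : a 1 ≠ 0)
    (hmul : ∀ s t : ℕ, 0 < s → 0 < t → s.Coprime t → a (s * t) = a s * a t)
    (hn : 0 < n) (hcop : n.Coprime d) (han : a n = 0)
    (hmin : ∀ m : ℕ, 0 < m → m < n → m.Coprime d → a m ≠ 0) : IsPrimePow n := by
  induction n using Nat.recOnPosPrimePosCoprime with
  | prime_pow p r hp hr => exact hp.isPrimePow.pow hr.ne'
  | zero => exact absurd hn (lt_irrefl 0)
  | one => exact absurd han ha1
  | coprime s t hs ht hst =>
    rw [hmul s t (by omega) (by omega) hst] at han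
    rcases mul_eq_zero.mp han with h | h
    · exact absurd h (hmin s (by omega) (lt_mul_of_one_lt_right (by omega) ht)
        hcop.coprime_mul_right)
    · exact absurd h (hmin t (by omega) (lt_mul_of_one_lt_left (by omega) hs)
        hcop.coprime_mul_left)

theorem stmt_5_general {N k d : ℕ} (hk : 2 ≤ k) (hke : Even k) (hd : 6 ∣ d)
    {a : ℕ → ℚ} (ha1 : a 1 = 1)
    (hmul : ∀ m n : ℕ, 0 < m → 0 < n → Nat.Coprime m n → a (m * n) = a m * a n)
    (hrec : ∀ p : ℕ, p.Prime → ¬ p ∣ N → ∀ r : ℕ,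
      a (p ^ (r + 2)) = a p * a (p ^ (r + 1)) - (p : ℚ) ^ (k - 1) * a (p ^ r))
    (hdvd : ∀ p : ℕ, p.Prime → p ∣ N → ∀ r : ℕ, a (p ^ (r + 1)) = a p * a (p ^ r))
    {n : ℕ} (hn : 0 < n) (hcop : n.Coprime d) (han : a n = 0)
    (hmin : ∀ m : ℕ, 0 < m → m < n → m.Coprime d → a m ≠ 0) :
    n.Prime := by
  have hpow : IsPrimePow n := isPrimePow_of_minimal_zero (by simp [ha1]) hmul hn hcop han hmin
  obtain ⟨p, r, hp, rfl⟩ := (isPrimePow_iff_pow_succ n).mp hpow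
  rw [← Nat.prime_iff] at hp
  obtain rfl | hr := r.eq_zero_or_pos
  · simpa using hp
  have hpd : p.Coprime d := (Nat.coprime_pow_left_iff r.succ_pos p d).mp hcop
  have hlower {j : ℕ} (hj : j < r + 1) : a (p ^ j) ≠ 0 :=
    hmin _ (pow_pos hp.pos j) (Nat.pow_lt_pow_right hp.one_lt hj) (hpd.pow_left j)
  have hap : a p ≠ 0 := by simpa using hlower (j := 1) (by omega)
  exfalso
  by_cases hpN : p ∣ N
  · exact mul_ne_zero hap (hlower r.lt_succ_self) (hdvd p hp hpN r ▸ han)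
  · have hlucas : IsLucasSequence (a p) ((p : ℚ) ^ (k - 1)) fun r ↦ a (p ^ r) :=
      ⟨by simp [ha1], by simp, hrec p hp hpN⟩
    have hodd : Odd (k - 1) := Nat.Even.sub_odd (by omega) hke odd_one
    have hp6 : p ∣ 6 := hlucas.dvd_six_of_apply_eq_zero hp hodd hap han
    exact hp.ne_one (hpd.eq_one_of_dvd (hp6.trans hd))

/-- For an integer-valued sequence satisfying the Hecke relations of a primitive form
of even weight `k` and level `N` with trivial character, the smallest positive integer
`n` with `gcd(n, 6) = 1` and `a n = 0` is prime. -/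
theorem stmt_5 (N : ℕ) (hN : 1 ≤ N) (k : ℕ) (hk : 2 ≤ k) (hke : Even k)
    (a : ℕ → ℤ) (ha1 : a 1 = 1)
    (hmul : ∀ m n : ℕ, 0 < m → 0 < n → Nat.Coprime m n → a (m * n) = a m * a n)
    (hrec : ∀ p : ℕ, p.Prime → ¬ p ∣ N → ∀ r : ℕ,
      a (p ^ (r + 2)) = a p * a (p ^ (r + 1)) - (p : ℤ) ^ (k - 1) * a (p ^ r))
    (hdvd : ∀ p : ℕ, p.Prime → p ∣ N → ∀ r : ℕ, a (p ^ (r + 1)) = a p * a (p ^ r))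
    (n : ℕ) (hn : 0 < n) (hcop : Nat.gcd n 6 = 1) (han : a n = 0)
    (hmin : ∀ m : ℕ, 0 < m → m < n → Nat.gcd m 6 = 1 → a m ≠ 0) :
    n.Prime := by
  exact stmt_5_general (a := fun n ↦ (a n : ℚ)) hk hke dvd_rfl (mod_cast ha1) (mod_cast hmul)
    (mod_cast hrec) (mod_cast hdvd) hn hcop (mod_cast han) (mod_cast hmin)
end

section
/- Let N ≥ 1 be divisible by 6 and let k ≥ 2 be an even integer. Let a : ℕ → ℤ satisfy: a(1) = 1; a(mn) = a(m)·a(n) for all coprime positive integers m, n; a(p^(r+2)) = a(p)·a(p^(r+1)) − p^(k−1)·a(p^r) for every prime p ∤ N and every r ≥ 0; and a(p^(r+1)) = a(p)·a(p^r) for every prime p | N and every r ≥ 0. If n is the smallest positive integer with a(n) = 0 (i.e. a(n) = 0 and a(m) ≠ 0 for all 1 ≤ m < n), then n is prime. -/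
/-!
A minimal zero `n` of a multiplicative function is a prime power `p ^ r`. If `p ∣ N`, then
`a (p ^ r) = a p ^ r`, so `r = 1`. If `p ∤ N`, then, with `Q = p ^ (k - 1)`, the recursion makes
`a (p ^ r)` the value at `a p` of a Dickson polynomial, that is,
`√Q ^ r * U_r (a p / (2 * √Q))` with `U_r` the Chebyshev polynomial of the second kind. The roots
of `U_r` are cosines of rational multiples of `π` in the open interval `(-1, 1)`, and `2 * cos` of
such an angle is an algebraic integer, so the rational number `(a p) ^ 2 / Q` must be one of
`0, 1, 2, 3`. As `k - 1` is odd, comparing `p`-adic valuations leaves only `a p = 0` and the cases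
`p ∈ {2, 3}`, `(a p) ^ 2 = p ^ k`; the latter need `p ∤ N`, so `6 ∣ N` rules them out.
-/

open Polynomial Polynomial.Chebyshev

section Dickson

variable {R : Type*} [CommRing R]

theorem eq_eval_dickson_two_of_rec {A Q : R} {x : ℕ → R} (h0 : x 0 = 1) (h1 : x 1 = A)
    (hx : ∀ r, x (r + 2) = A * x (r + 1) - Q * x r) (r : ℕ) :
    x r = (dickson 2 Q r).eval A := by
  induction r using Nat.twoStepInduction with
  | zero => norm_num [h0]
  | one => simp [h1]
  | more r ih ih' => simp [hx, ih, ih']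

theorem eval_dickson_two_sq (s t : R) (r : ℕ) :
    (dickson 2 (s ^ 2) r).eval (2 * s * t) = s ^ r * (U R r).eval t := by
  refine (eq_eval_dickson_two_of_rec (x := fun r => s ^ r * (U R r).eval t)
    (by simp) (by simp; ring) (fun r => ?_) r).symm
  have hU : (U R (r + 2 : ℕ)).eval t = 2 * t * (U R (r + 1 : ℕ)).eval t - (U R r).eval t := by
    push_cast
    simp [U_add_two]
  rw [hU]
  ring

end Dickson

section RootsOfChebyshev

open Real

theorem exists_rat_eq_cos_of_isRoot_U {r : ℕ} {t : ℝ} (ht : (U ℝ r).IsRoot t) :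
    ∃ θ : ℚ, t = cos (θ * π) := by
  have hU : U ℝ r ≠ 0 := by rw [Ne, U_eq_zero_iff]; lia
  rw [← mem_roots hU, roots_U_real, Finset.mem_val, Finset.mem_image] at ht
  obtain ⟨i, -, rfl⟩ := ht
  exact ⟨(i + 1) / (r + 1), by push_cast; ring_nf⟩

theorem sq_lt_one_of_isRoot_U {r : ℕ} {t : ℝ} (ht : (U ℝ r).IsRoot t) : t ^ 2 < 1 := by
  have hle : t ^ 2 ≤ 1 := by
    obtain ⟨θ, rfl⟩ := exists_rat_eq_cos_of_isRoot_U ht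
    exact cos_sq_le_one _
  refine hle.lt_of_ne fun h => ?_
  rcases sq_eq_one_iff.mp h with rfl | rfl
  · exact Nat.cast_add_one_ne_zero r (by simpa [U_eval_one] using ht)
  · exact Nat.cast_add_one_ne_zero r (by simpa [U_eval_neg_one] using ht)

theorem exists_nat_two_mul_sq_eq_of_isRoot_U {r : ℕ} {t : ℝ} (ht : (U ℝ r).IsRoot t) {q : ℚ}
    (hq : (2 * t) ^ 2 = q) : ∃ j < 4, q = (j : ℕ) := by
  obtain ⟨θ, hθ⟩ := exists_rat_eq_cos_of_isRoot_U ht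
  have hint : IsIntegral ℤ ((2 * t) ^ 2) := hθ ▸ (isIntegral_two_mul_cos_rat_mul_pi θ).pow 2
  obtain ⟨i, hi⟩ := hint.exists_int_iff_exists_rat.mp ⟨q, hq⟩
  have hqi : q = i := by exact_mod_cast hq.symm.trans hi
  have hi0 : 0 ≤ i := by exact_mod_cast hi ▸ sq_nonneg (2 * t)
  lift i to ℕ using hi0
  refine ⟨i, ?_, by exact_mod_cast hqi⟩
  have hi4 : (i : ℝ) < 4 := by
    have := sq_lt_one_of_isRoot_U ht
    push_cast at hi
    linarith
  exact_mod_cast hi4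

theorem exists_sq_eq_nat_mul_of_eval_dickson_two_eq_zero {A Q : ℚ} (hQ : 0 < Q) {r : ℕ}
    (h : (dickson 2 Q r).eval A = 0) : ∃ j < 4, A ^ 2 = (j : ℕ) * Q := by
  have hQ' : (0 : ℝ) < Q := by exact_mod_cast hQ
  obtain ⟨s, hs, hsQ⟩ : ∃ s : ℝ, 0 < s ∧ s ^ 2 = Q := ⟨√Q, sqrt_pos.mpr hQ', sq_sqrt hQ'.le⟩
  have hroot : (U ℝ r).IsRoot (A / (2 * s)) := by
    have hreal : (dickson 2 (Q : ℝ) r).eval (A : ℝ) = 0 := by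
      simpa [h, map_dickson] using eval_map_apply (f := Rat.castHom ℝ) (p := dickson 2 Q r) A
    rw [← hsQ, ← mul_div_cancel₀ (A : ℝ) (by positivity : 2 * s ≠ 0), eval_dickson_two_sq] at hreal
    exact (mul_eq_zero.mp hreal).resolve_left (pow_ne_zero _ hs.ne')
  have hsq : (2 * (A / (2 * s))) ^ 2 = ((A ^ 2 / Q : ℚ) : ℝ) := by
    push_cast
    rw [← hsQ]
    field_simp
  obtain ⟨j, hj, hAj⟩ := exists_nat_two_mul_sq_eq_of_isRoot_U hroot hsq
  exact ⟨j, hj, (div_eq_iff hQ.ne').mp hAj⟩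

end RootsOfChebyshev

theorem dvd_of_sq_eq_mul_odd_pow {M : Type*} [CommMonoidWithZero M] [IsCancelMulZero M]
    {p x j : M} (hp : Prime p) {m : ℕ} (hm : Odd m) (h : x ^ 2 = j * p ^ m) : p ∣ j := by
  obtain ⟨t, rfl⟩ := hm
  induction t generalizing x with
  | zero =>
    obtain ⟨y, rfl⟩ : p ∣ x := hp.dvd_of_dvd_pow (h ▸ dvd_mul_of_dvd_right (by simp) j)
    refine ⟨y ^ 2, mul_right_cancel₀ hp.ne_zero ?_⟩
    simpa [mul_pow, sq, mul_comm, mul_left_comm, mul_assoc] using h.symm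
  | succ t ih =>
    obtain ⟨y, rfl⟩ : p ∣ x :=
      hp.dvd_of_dvd_pow (h ▸ dvd_mul_of_dvd_right (dvd_pow_self p (by lia)) j)
    refine ih (x := y) (mul_left_cancel₀ (pow_ne_zero 2 hp.ne_zero) ?_)
    rw [← mul_pow, h, mul_left_comm, ← pow_add]
    congr 2
    ring

theorem eq_two_or_three_of_eval_dickson_two_prime_pow_eq_zero {p : ℕ} (hp : p.Prime) {m : ℕ}
    (hm : Odd m) {A : ℤ} (hA : A ≠ 0) {r : ℕ} (h : (dickson 2 ((p : ℤ) ^ m) r).eval A = 0) :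
    (p = 2 ∨ p = 3) ∧ A ^ 2 = (p : ℤ) ^ (m + 1) := by
  have hrat : (dickson 2 ((p : ℚ) ^ m) r).eval (A : ℚ) = 0 := by
    simpa [h, map_dickson] using
      eval_map_apply (f := Int.castRingHom ℚ) (p := dickson 2 ((p : ℤ) ^ m) r) A
  obtain ⟨j, hj4, hAj⟩ :=
    exists_sq_eq_nat_mul_of_eval_dickson_two_eq_zero (by have := hp.pos; positivity) hrat
  have hAj : A ^ 2 = j * (p : ℤ) ^ m := by exact_mod_cast hAj
  have hpj : p ∣ j := Int.natCast_dvd_natCast.mp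
    (dvd_of_sq_eq_mul_odd_pow (Nat.prime_iff_prime_int.mp hp) hm hAj)
  have hj0 : j ≠ 0 := by
    rintro rfl
    simp [hA] at hAj
  have hp2 := hp.two_le
  obtain rfl : j = p := Nat.eq_of_dvd_of_lt_two_mul hj0 hpj (by lia)
  exact ⟨by lia, by rw [hAj, pow_succ']⟩

section LeastZero

variable {R : Type*} [MulZeroClass R] [NoZeroDivisors R] {a : ℕ → R}

theorem isPrimePow_of_isLeast_zero (ha1 : a 1 ≠ 0)
    (hmul : ∀ m n : ℕ, 0 < m → 0 < n → Nat.Coprime m n → a (m * n) = a m * a n)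
    {n : ℕ} (hn : IsLeast {n | 0 < n ∧ a n = 0} n) : IsPrimePow n := by
  obtain ⟨⟨hpos, hzero⟩, hle⟩ := hn
  induction n using Nat.recOnPosPrimePosCoprime with
  | prime_pow p r hp hr => exact hp.isPrimePow.pow hr.ne'
  | zero => exact absurd hpos (lt_irrefl 0)
  | one => exact absurd hzero ha1
  | coprime u v hu hv huv _ _ =>
    rw [hmul u v (by lia) (by lia) huv] at hzero
    exfalso
    rcases mul_eq_zero.mp hzero with h | h
    · exact (lt_mul_of_one_lt_right (by lia) hv).not_ge (hle ⟨by lia, h⟩)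
    · exact (lt_mul_of_one_lt_left (by lia) hu).not_ge (hle ⟨by lia, h⟩)

theorem prime_of_isLeast_zero (ha1 : a 1 ≠ 0)
    (hmul : ∀ m n : ℕ, 0 < m → 0 < n → Nat.Coprime m n → a (m * n) = a m * a n)
    (hpow : ∀ p : ℕ, p.Prime → a p ≠ 0 → ∀ r : ℕ, a (p ^ r) ≠ 0)
    {n : ℕ} (hn : IsLeast {n | 0 < n ∧ a n = 0} n) : n.Prime := by
  obtain ⟨p, r, hp, hr, rfl⟩ := (isPrimePow_nat_iff n).mp (isPrimePow_of_isLeast_zero ha1 hmul hn)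
  have hap : a p = 0 := by
    by_contra h
    exact hpow p hp h r hn.1.2
  have hle : p ^ r ≤ p := hn.2 ⟨hp.pos, hap⟩
  rwa [hle.antisymm (Nat.le_self_pow hr.ne' p)]

end LeastZero

/-- The two excluded values would give `a (2 ^ 3) = 0` and `a (3 ^ 5) = 0` respectively. For
`N = 1`, `k = 12` this covers Ramanujan's `τ`, as `τ 2 = -24 ≠ ± 2 ^ 6` and
`τ 3 = 252 ≠ ± 3 ^ 6`. -/
theorem stmt_6_general (N : ℕ) (k : ℕ) (hk : 2 ≤ k) (hke : Even k)
    (a : ℕ → ℤ) (ha1 : a 1 = 1)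
    (hmul : ∀ m n : ℕ, 0 < m → 0 < n → Nat.Coprime m n → a (m * n) = a m * a n)
    (hrec : ∀ p : ℕ, p.Prime → ¬ p ∣ N → ∀ r : ℕ,
      a (p ^ (r + 2)) = a p * a (p ^ (r + 1)) - (p : ℤ) ^ (k - 1) * a (p ^ r))
    (hdvd : ∀ p : ℕ, p.Prime → p ∣ N → ∀ r : ℕ, a (p ^ (r + 1)) = a p * a (p ^ r))
    (h2 : ¬ 2 ∣ N → a 2 ^ 2 ≠ 2 ^ k) (h3 : ¬ 3 ∣ N → a 3 ^ 2 ≠ 3 ^ k)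
    (n : ℕ) (hn : 0 < n) (han : a n = 0)
    (hmin : ∀ m : ℕ, 1 ≤ m → m < n → a m ≠ 0) :
    n.Prime := by
  refine prime_of_isLeast_zero (by simp [ha1]) hmul (fun p hp hap r hpr => ?_)
    ⟨⟨hn, han⟩, fun m hm => not_lt.mp fun hmn => hmin m hm.1 hmn hm.2⟩
  by_cases hpN : p ∣ N
  · have hpow : ∀ s, a (p ^ s) = a p ^ s := fun s => by
      induction s with
      | zero => simp [ha1]
      | succ s ih => rw [hdvd p hp hpN, ih, pow_succ']
    exact pow_ne_zero r hap (hpow r ▸ hpr)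
  · have heval : a (p ^ r) = (dickson 2 ((p : ℤ) ^ (k - 1)) r).eval (a p) :=
      eq_eval_dickson_two_of_rec (x := fun r => a (p ^ r)) (by simp [ha1]) (by simp)
        (hrec p hp hpN) r
    have hodd : Odd (k - 1) := Nat.Even.sub_odd (by lia) hke odd_one
    obtain ⟨rfl | rfl, hsq⟩ :=
      eq_two_or_three_of_eval_dickson_two_prime_pow_eq_zero hp hodd hap (heval ▸ hpr)
    all_goals rw [Nat.sub_add_cancel (by lia)] at hsq
    · exact h2 hpN hsq
    · exact h3 hpN hsq

/-- For an integer-valued sequence satisfying the Hecke relations of a primitive form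
of even weight `k` and level `N` with trivial character, if `6 ∣ N` then the smallest
positive integer `n` with `a n = 0` is prime. -/
theorem stmt_6 (N : ℕ) (hN : 1 ≤ N) (h6 : 6 ∣ N) (k : ℕ) (hk : 2 ≤ k) (hke : Even k)
    (a : ℕ → ℤ) (ha1 : a 1 = 1)
    (hmul : ∀ m n : ℕ, 0 < m → 0 < n → Nat.Coprime m n → a (m * n) = a m * a n)
    (hrec : ∀ p : ℕ, p.Prime → ¬ p ∣ N → ∀ r : ℕ,
      a (p ^ (r + 2)) = a p * a (p ^ (r + 1)) - (p : ℤ) ^ (k - 1) * a (p ^ r))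
    (hdvd : ∀ p : ℕ, p.Prime → p ∣ N → ∀ r : ℕ, a (p ^ (r + 1)) = a p * a (p ^ r))
    (n : ℕ) (hn : 0 < n) (han : a n = 0)
    (hmin : ∀ m : ℕ, 1 ≤ m → m < n → a m ≠ 0) :
    n.Prime :=
  stmt_6_general N k hk hke a ha1 hmul hrec hdvd
    (fun h => absurd ((by norm_num : 2 ∣ 6).trans h6) h)
    (fun h => absurd ((by norm_num : 3 ∣ 6).trans h6) h) n hn han hmin
end

section
/- Let p be a prime, let k ≥ 2 be an even integer, and let α, β ∈ ℂ satisfy α·β = p^(k−1), α + β ∈ ℤ, α + β ≠ 0, and suppose α/β is a root of unity with α/β ≠ 1. Then either p = 2 and α + β = ±2^(k/2), or p = 3 and α + β = ±3^(k/2). -/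
/-!
Put `ζ = α / β`, a root of unity with `ζ ≠ ±1`. Since `(α + β)² = αβ (ζ + ζ⁻¹ + 2)`, the algebraic
integer `ζ + ζ⁻¹ = 2 Re ζ` is rational and lies strictly between `-2` and `2`, so it is `-1`, `0`
or `1`. Hence `α + β` is an integer whose square is `c * d ^ (2 * j + 1)` with `c ∈ {1, 2, 3}`, and
comparing square parts gives `c = d` because `d` is squarefree.
-/

lemma isIntegral_add_inv_of_isOfFinOrder {R K : Type*} [CommRing R] [Field K] [Algebra R K]
    {ζ : K} (hζ : IsOfFinOrder ζ) : IsIntegral R (ζ + ζ⁻¹) := by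
  obtain ⟨n, hn, hpow⟩ := isOfFinOrder_iff_pow_eq_one.mp hζ
  have hpow_inv : ζ⁻¹ ^ n = 1 := by rw [inv_pow, hpow, inv_one]
  exact .add (.of_pow hn (hpow ▸ isIntegral_one)) (.of_pow hn (hpow_inv ▸ isIntegral_one))

lemma add_inv_eq_two_mul_re_of_norm_eq_one {z : ℂ} (hz : ‖z‖ = 1) :
    z + z⁻¹ = (2 * z.re : ℝ) := by
  rw [Complex.inv_eq_conj hz, Complex.add_conj]

lemma abs_re_lt_one_of_norm_eq_one {z : ℂ} (hz : ‖z‖ = 1) (hz_one : z ≠ 1) (hz_neg_one : z ≠ -1) :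
    |z.re| < 1 := by
  rw [← hz, Complex.abs_re_lt_norm]
  intro him
  have hre : |z.re| = 1 := by rw [Complex.abs_re_eq_norm.mpr him, hz]
  rcases eq_or_eq_neg_of_abs_eq hre with hre | hre
  · exact hz_one (Complex.ext hre him)
  · exact hz_neg_one (Complex.ext hre (by simpa using him))

lemma exists_int_add_inv_eq_of_isOfFinOrder {ζ : ℂ} (hζ : IsOfFinOrder ζ) (hζ_one : ζ ≠ 1)
    (hζ_neg_one : ζ ≠ -1) (hrat : ∃ q : ℚ, ζ + ζ⁻¹ = q) : ∃ t : ℤ, ζ + ζ⁻¹ = t ∧ |t| ≤ 1 := by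
  obtain ⟨t, ht⟩ := (isIntegral_add_inv_of_isOfFinOrder hζ).exists_int_iff_exists_rat.mp hrat
  refine ⟨t, ht, ?_⟩
  have ht_re : (t : ℝ) = 2 * ζ.re := by
    rw [add_inv_eq_two_mul_re_of_norm_eq_one hζ.norm_eq_one] at ht
    exact_mod_cast ht.symm
  have ht_lt : |(t : ℝ)| < 2 := by
    rw [ht_re, abs_mul, abs_two]
    linarith [abs_re_lt_one_of_norm_eq_one hζ.norm_eq_one hζ_one hζ_neg_one]
  exact Int.lt_add_one_iff.mp (by exact_mod_cast ht_lt)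

lemma add_sq_eq_mul_mul_div_add_inv_add_two {K : Type*} [Field K] {a b : K} (ha : a ≠ 0)
    (hb : b ≠ 0) : (a + b) ^ 2 = a * b * (a / b + (a / b)⁻¹ + 2) := by
  field_simp
  ring

lemma exists_eq_pow_mul_and_eq_mul_sq {R : Type*} [CommRing R] [IsDomain R]
    [UniqueFactorizationMonoid R] {d m c : R} {j : ℕ} (hd : Squarefree d)
    (h : m ^ 2 = c * d ^ (2 * j + 1)) : ∃ r, m = d ^ (j + 1) * r ∧ c = d * r ^ 2 := by
  have hd_ne : d ≠ 0 := hd.ne_zero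
  obtain ⟨n, rfl⟩ : d ^ j ∣ m := by
    rw [← UniqueFactorizationMonoid.pow_dvd_pow_iff_dvd two_ne_zero, h]
    exact ⟨c * d, by ring⟩
  have hn : n ^ 2 = c * d :=
    mul_left_cancel₀ (pow_ne_zero (2 * j) hd_ne) (by linear_combination h)
  obtain ⟨r, rfl⟩ : d ∣ n :=
    (hd.dvd_pow_iff_dvd two_ne_zero).mp (hn ▸ dvd_mul_left d c)
  exact ⟨r, by ring, mul_right_cancel₀ hd_ne (by linear_combination -hn)⟩

lemma eq_and_eq_or_eq_neg_of_sq_eq_mul_pow {d m c : ℤ} {j : ℕ} (hd : Squarefree d) (hc_pos : 0 < c)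
    (hc_le : c ≤ 3) (h : m ^ 2 = c * d ^ (2 * j + 1)) :
    d = c ∧ (m = d ^ (j + 1) ∨ m = -d ^ (j + 1)) := by
  obtain ⟨r, rfl, rfl⟩ := exists_eq_pow_mul_and_eq_mul_sq hd h
  have hd_pos : 0 < d := pos_of_mul_pos_left hc_pos (sq_nonneg r)
  have hr_ne : r ≠ 0 := by
    rintro rfl
    simp at hc_pos
  have hr : r ^ 2 = 1 := Int.sq_eq_one_of_sq_le_three (by nlinarith [sq_nonneg r]) hr_ne
  refine ⟨by rw [hr, mul_one], ?_⟩
  rcases sq_eq_one_iff.mp hr with rfl | rfl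
  · exact .inl (mul_one _)
  · exact .inr (mul_neg_one _)

lemma exists_int_add_sq_eq_mul {α β : ℂ} (hprod : ∃ q : ℚ, α * β = q) (hsum : ∃ q : ℚ, α + β = q)
    (hne : α + β ≠ 0) (hroot : IsOfFinOrder (α / β)) (hne1 : α / β ≠ 1) :
    ∃ c : ℤ, 0 < c ∧ c ≤ 3 ∧ (α + β) ^ 2 = c * (α * β) := by
  obtain ⟨hα, hβ⟩ : α ≠ 0 ∧ β ≠ 0 := div_ne_zero_iff.mp hroot.isUnit.ne_zero
  have hsq := add_sq_eq_mul_mul_div_add_inv_add_two hα hβ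
  have hneg : α / β ≠ -1 := fun h ↦ hne (by linear_combination (div_eq_iff hβ).mp h)
  have hrat : ∃ q : ℚ, α / β + (α / β)⁻¹ = q := by
    obtain ⟨a, ha⟩ := hprod
    obtain ⟨s, hs⟩ := hsum
    refine ⟨s ^ 2 / a - 2, ?_⟩
    push_cast
    rw [← hs, ← ha, hsq, mul_div_cancel_left₀ _ (mul_ne_zero hα hβ), add_sub_cancel_right]
  obtain ⟨t, ht, ht_le⟩ := exists_int_add_inv_eq_of_isOfFinOrder hroot hne1 hneg hrat
  obtain ⟨ht_lower, ht_upper⟩ := abs_le.mp ht_le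
  refine ⟨t + 2, by linarith, by linarith, ?_⟩
  rw [hsq, ht]
  push_cast
  ring

theorem stmt_10_general {d : ℤ} (hd : Squarefree d) (j : ℕ) {α β : ℂ}
    (hprod : α * β = (d : ℂ) ^ (2 * j + 1)) (hrat : ∃ q : ℚ, α + β = q) (hne : α + β ≠ 0)
    (hroot : IsOfFinOrder (α / β)) (hne1 : α / β ≠ 1) :
    (d = 1 ∨ d = 2 ∨ d = 3) ∧ (α + β = d ^ (j + 1) ∨ α + β = -d ^ (j + 1)) := by
  obtain ⟨c, hc_pos, hc_le, hsq⟩ := exists_int_add_sq_eq_mul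
    ⟨(d : ℚ) ^ (2 * j + 1), by exact_mod_cast hprod⟩ hrat hne hroot hne1
  have hsq_int : (α + β) ^ 2 = (c * d ^ (2 * j + 1) : ℤ) := by
    rw [hsq, hprod]
    push_cast
    rfl
  have hsum_integral : IsIntegral ℤ (α + β) :=
    .of_pow two_pos (hsq_int ▸ isIntegral_algebraMap)
  obtain ⟨m, hm⟩ := hsum_integral.exists_int_iff_exists_rat.mp hrat
  rw [hm] at hsq_int ⊢
  obtain ⟨rfl, hm_eq⟩ :=
    eq_and_eq_or_eq_neg_of_sq_eq_mul_pow hd hc_pos hc_le (by exact_mod_cast hsq_int)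
  exact ⟨by lia, by exact_mod_cast hm_eq⟩

/-- Key arithmetic step: if `α β = p^(k-1)` with `k ≥ 2` even, `α + β` is a nonzero
integer, and `α/β` is a root of unity different from 1, then either `p = 2` and
`α + β = ±2^(k/2)`, or `p = 3` and `α + β = ±3^(k/2)`. -/
theorem stmt_10 (p : ℕ) (hp : p.Prime) (k : ℕ) (hk : 2 ≤ k) (hke : Even k)
    (α β : ℂ) (hprod : α * β = (p : ℂ) ^ (k - 1))
    (hint : ∃ m : ℤ, α + β = (m : ℂ)) (hne : α + β ≠ 0)
    (hroot : ∃ n : ℕ, 0 < n ∧ (α / β) ^ n = 1) (hne1 : α / β ≠ 1) :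
    (p = 2 ∧ (α + β = 2 ^ (k / 2) ∨ α + β = -(2 ^ (k / 2)))) ∨
    (p = 3 ∧ (α + β = 3 ^ (k / 2) ∨ α + β = -(3 ^ (k / 2)))) := by
  obtain ⟨j, rfl⟩ : ∃ j, k = 2 * (j + 1) := ⟨k / 2 - 1, by grind⟩
  obtain ⟨hp_eq, hsum⟩ := stmt_10_general (Int.squarefree_natCast.mpr hp.squarefree) j
    (by simpa [mul_add] using hprod) (hint.imp' (↑) (by simp)) hne
    (isOfFinOrder_iff_pow_eq_one.mpr hroot) hne1
  obtain rfl | rfl : p = 2 ∨ p = 3 := by have := hp.two_le; lia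
  all_goals simpa using hsum
end
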